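/- Cross-section variant of the comparison theorem: In the setting of the main comparison theorem, let S ⊆ T be a cross section (every leaf v ∈ ∂T has exactly one prefix lying in S), let T^S be the set of all prefixes of elements of S, and set A*_S = sup{H_q(x)/ℓ(x) : x ∈ interior T \ interior T^S} and a*_S = inf{H_q(x)/ℓ(x) : x ∈ interior T \ interior T^S}. Then for every ε > 0 (with witness M_ε) and 0 < δ < 1/2, |H(P)/ℓ(P) − H(Q)/ℓ(Q)| ≤ L·(2ε + M_ε·φ(δ)) + (C·√L/δ)·√(D(P‖Q)/ℓ(P)) + ((A*_S − a*_S)/2)·‖μ_P − μ_Q‖₁ + (A − a)·max{ℓ(P_S)/ℓ(P), ℓ(Q_S)/ℓ(Q)}, where ℓ(P_S) = ∑_{s∈S} |s|_ℓ·P(∂T_s), ℓ(Q_S) = ∑_{s∈S} |s|_ℓ·Q(∂T_s), and L, C, A, a, μ_P, μ_Q are as in the main comparison theorem. -/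

import Mathlib

open scoped BigOperators
open Filter

noncomputable section

/-- The entropy function `φ(t) = t·log₂(1/t)` (which vanishes at `t = 0`). -/
def phi (t : ℝ) : ℝ := t * Real.logb 2 (1 / t)

/-- A rooted tree: a set of finite lists over ℕ containing the empty list (the root)
and closed under taking prefixes. -/
def IsTree (T : Set (List ℕ)) : Prop :=
  ([] : List ℕ) ∈ T ∧ ∀ x ∈ T, ∀ y : List ℕ, y <+: x → y ∈ T

/-- The successors of `x` in `T`: one-entry extensions of `x` lying in `T`. -/
def succs (T : Set (List ℕ)) (x : List ℕ) : Set (List ℕ) :=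
  {y | y ∈ T ∧ ∃ n : ℕ, y = x ++ [n]}

/-- `x` is a leaf of `T`. -/
def IsLeaf (T : Set (List ℕ)) (x : List ℕ) : Prop :=
  x ∈ T ∧ succs T x = ∅

/-- The boundary of `T`: its set of leaves. -/
def bdry (T : Set (List ℕ)) : Set (List ℕ) := {x | IsLeaf T x}

/-- The interior of `T`. -/
def intr (T : Set (List ℕ)) : Set (List ℕ) := T \ bdry T

/-- No vertex has exactly one successor. -/
def NoUnary (T : Set (List ℕ)) : Prop :=
  ∀ x ∈ T, ∀ y : List ℕ, succs T x ≠ {y}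

/-- `T` has no infinite geodesic. -/
def NoInfGeo (T : Set (List ℕ)) : Prop :=
  ¬ ∃ ξ : ℕ → ℕ, ∀ n : ℕ, (List.ofFn fun i : Fin n => ξ i) ∈ T

/-- `∂T_x`: the set of leaves having `x` as a prefix. -/
def cone (T : Set (List ℕ)) (x : List ℕ) : Set (List ℕ) :=
  {v | v ∈ bdry T ∧ x <+: v}

/-- `P(∂T_x)`. -/
def mass (T : Set (List ℕ)) (P : List ℕ → ℝ) (x : List ℕ) : ℝ :=
  ∑' v : cone T x, P v

/-- `|x|_ℓ`: the sum of `ℓ(y)` over the proper prefixes `y` of `x`. -/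
def lenWt (ℓ : List ℕ → ℝ) (x : List ℕ) : ℝ :=
  ∑ i ∈ Finset.range x.length, ℓ (x.take i)

/-- Expected length `ℓ(P)`. -/
def expLen (T : Set (List ℕ)) (ℓ P : List ℕ → ℝ) : ℝ :=
  ∑' v : bdry T, lenWt ℓ v * P v

/-- Forward transition probability `p(y|x) = P(∂T_y)/P(∂T_x)`. -/
def fwd (T : Set (List ℕ)) (P : List ℕ → ℝ) (x y : List ℕ) : ℝ :=
  mass T P y / mass T P x

/-- Node-average measure `μ_P(x) = ℓ(x)·P(∂T_x)/ℓ(P)`. -/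
def nodeAvg (T : Set (List ℕ)) (ℓ P : List ℕ → ℝ) (x : List ℕ) : ℝ :=
  ℓ x * mass T P x / expLen T ℓ P

/-- A (fully supported) probability measure on a set `S` of vertices. -/
def IsProbOn (S : Set (List ℕ)) (P : List ℕ → ℝ) : Prop :=
  (∀ v ∈ S, 0 < P v) ∧ HasSum (fun v : S => P v) 1

/-- The local entropy `H_q(x) = ∑_{y∈N(x)} φ(q(y|x))`. -/
def Hloc (T : Set (List ℕ)) (Q : List ℕ → ℝ) (x : List ℕ) : ℝ :=
  ∑' y : succs T x, phi (fwd T Q x y)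

/-- The subtree `T^S` spanned by a cross section `S`: all prefixes of elements of `S`. -/
def subTreeOf (S : Set (List ℕ)) : Set (List ℕ) :=
  {x | ∃ s ∈ S, x <+: s}


lemma log_lower (u : ℝ) (hu : 1 ≤ u) : 2 * (u - 1) ≤ (u + 1) * Real.log u := by
  have h := Real.le_log_one_add_of_nonneg (x := u - 1) (by linarith)
  rw [show 1 + (u - 1) = u by ring, show u - 1 + 2 = u + 1 by ring, div_le_iff₀ (by linarith)] at h
  linarith

lemma log_upper (u : ℝ) (hu0 : 0 < u) (hu : u ≤ 1) : (u + 1) * Real.log u ≤ 2 * (u - 1) := by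
  have h := log_lower (u⁻¹) ((one_le_inv₀ hu0).2 hu)
  rw [Real.log_inv] at h
  have h2 := mul_le_mul_of_nonneg_left h hu0.le
  have e1 : u * (2 * (u⁻¹ - 1)) = 2 * (1 - u) := by field_simp
  have e2 : u * ((u⁻¹ + 1) * -Real.log u) = -((u + 1) * Real.log u) := by
    field_simp
    ring
  linarith

lemma pinsker_aux (u : ℝ) (hu : 0 < u) :
    3 * (u - 1) ^ 2 ≤ (2 * u + 4) * (u * Real.log u - u + 1) := by
  set g : ℝ → ℝ := fun u => (2 * u + 4) * (u * Real.log u - u + 1) - 3 * (u - 1) ^ 2 with hg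
  have hd : ∀ x : ℝ, 0 < x → HasDerivAt g (4 * ((x + 1) * Real.log x - 2 * (x - 1))) x := by
    intro x hx
    have h1 : HasDerivAt (fun u : ℝ => 2 * u + 4) 2 x := by
      simpa using ((hasDerivAt_id x).const_mul 2).add_const 4
    have h2 : HasDerivAt (fun u : ℝ => u * Real.log u - u + 1) (Real.log x) x := by
      have := ((Real.hasDerivAt_mul_log hx.ne').sub (hasDerivAt_id x)).add_const 1
      exact this.congr_deriv (by ring)
    have h3 : HasDerivAt (fun u : ℝ => 3 * (u - 1) ^ 2) (6 * (x - 1)) x := by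
      have := ((((hasDerivAt_id x).sub_const 1).pow 2).const_mul 3)
      exact this.congr_deriv (by simp; ring)
    have := (h1.mul h2).sub h3
    exact this.congr_deriv (by ring)
  have g1 : g 1 = 0 := by simp [hg]
  suffices 0 ≤ g u by simp only [hg] at this; linarith
  rcases le_total 1 u with h | h
  · have : MonotoneOn g (Set.Ici 1) := by
      apply monotoneOn_of_deriv_nonneg (convex_Ici 1)
      · intro x hx
        exact (hd x (lt_of_lt_of_le one_pos hx)).continuousAt.continuousWithinAt
      · intro x hx
        rw [interior_Ici] at hx
        exact (hd x (lt_trans one_pos hx)).differentiableAt.differentiableWithinAt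
      · intro x hx
        rw [interior_Ici] at hx
        rw [(hd x (lt_trans one_pos hx)).deriv]
        have := log_lower x (le_of_lt hx)
        linarith
    have := this (Set.mem_Ici.2 le_rfl) (Set.mem_Ici.2 h) h
    linarith
  · have : AntitoneOn g (Set.Ioc 0 1) := by
      apply antitoneOn_of_deriv_nonpos (convex_Ioc 0 1)
      · intro x hx
        exact (hd x hx.1).continuousAt.continuousWithinAt
      · intro x hx
        rw [interior_Ioc] at hx
        exact (hd x hx.1).differentiableAt.differentiableWithinAt
      · intro x hx
        rw [interior_Ioc] at hx
        rw [(hd x hx.1).deriv]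
        have := log_upper x hx.1 hx.2.le
        linarith
    have := this (Set.mem_Ioc.2 ⟨hu, h⟩) (Set.mem_Ioc.2 ⟨one_pos, le_rfl⟩) h
    linarith

lemma pinsker_pt (p q : ℝ) (hp : 0 < p) (hq : 0 < q) :
    (p - q) ^ 2 ≤ (2 * p + 4 * q) / 3 * (p * Real.log (p / q) + q - p) := by
  have h := pinsker_aux (p / q) (div_pos hp hq)
  have h2 := mul_le_mul_of_nonneg_left h (sq_nonneg q)
  have e1 : q ^ 2 * (3 * (p / q - 1) ^ 2) = 3 * (p - q) ^ 2 := by field_simp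
  have e2 : q ^ 2 * ((2 * (p / q) + 4) * (p / q * Real.log (p / q) - p / q + 1)) =
    (2 * p + 4 * q) * (p * Real.log (p / q) + q - p) := by
    generalize Real.log (p / q) = L
    field_simp
    ring
  linarith

lemma phi_eq (t : ℝ) : phi t = -(t * Real.log t) / Real.log 2 := by
  unfold phi Real.logb
  rw [one_div, Real.log_inv]; ring

lemma log2_pos : 0 < Real.log 2 := Real.log_pos one_lt_two

lemma phi_nonneg {t : ℝ} (h0 : 0 ≤ t) (h1 : t ≤ 1) : 0 ≤ phi t := by
  rw [phi_eq]
  have := Real.log_nonpos h0 h1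
  apply div_nonneg _ log2_pos.le
  nlinarith

lemma phi_le (t : ℝ) (h0 : 0 < t) : phi t ≤ 1 / (Real.exp 1 * Real.log 2) := by
  rw [phi_eq, ← div_div]
  apply div_le_div_of_nonneg_right _ log2_pos.le
  have h := Real.add_one_le_exp (-1 - Real.log t)
  rw [Real.exp_sub, Real.exp_neg, Real.exp_log h0] at h
  rw [le_div_iff₀ h0] at h
  rw [one_div]
  linarith

lemma phi_diff_lt (s t δ : ℝ) (hs : 0 < s) (hst : s ≤ t) (ht : t ≤ 1) (hδ0 : 0 < δ)
    (hδ : δ < 1/2) :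
    |phi s - phi t| ≤ phi δ + 2 / (Real.exp 1 * Real.log 2 * δ) * (t - s) := by
  have ht0 : 0 < t := lt_of_lt_of_le hs hst
  have l2 := log2_pos
  have he : 0 < Real.exp 1 := Real.exp_pos 1
  have phd : 0 ≤ phi δ := phi_nonneg hδ0.le (by linarith)
  have eK : 2 / (Real.exp 1 * Real.log 2 * δ) * (t - s) =
    1 / (Real.exp 1 * Real.log 2) * ((t - s) / (δ / 2)) := by
    field_simp
  have hK : 0 ≤ 1 / (Real.exp 1 * Real.log 2) := by positivity
  rcases le_total (δ / 2) (t - s) with hr | hr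
  · have h1 := phi_le s hs
    have h2 := phi_le t ht0
    have h3 := phi_nonneg hs.le (hst.trans ht)
    have h4 := phi_nonneg ht0.le ht
    have h5 : 1 ≤ (t - s) / (δ / 2) := by rw [le_div_iff₀ (by linarith)]; linarith
    have h6 : 1 / (Real.exp 1 * Real.log 2) ≤ 2 / (Real.exp 1 * Real.log 2 * δ) * (t - s) := by
      rw [eK]; exact le_mul_of_one_le_right hK h5
    rw [abs_le]; constructor <;> linarith
  · -- small difference
    rw [abs_le]
    have hlogst : Real.log s ≤ Real.log t := Real.log_le_log hs hst
    constructor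
    · -- phi t - phi s ≤ phi (t-s) ≤ phi δ
      have hpos : 0 ≤ 2 / (Real.exp 1 * Real.log 2 * δ) * (t - s) := by
        apply mul_nonneg (by positivity); linarith
      suffices phi t - phi s ≤ phi δ by linarith
      rw [phi_eq, phi_eq, phi_eq, ← sub_div]
      apply div_le_div_of_nonneg_right _ l2.le
      rcases eq_or_lt_of_le hst with e | hlt
      · subst e; rw [phi_eq] at phd
        have := (div_nonneg_iff.1 phd)
        rcases this with h | h
        · linarith [h.1]
        · linarith [h.2]
      have hr0 : 0 < t - s := by linarith
      have hlr : Real.log (t - s) ≤ Real.log t := Real.log_le_log hr0 (by linarith)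
      have sub : -(t * Real.log t) - -(s * Real.log s) ≤ -((t - s) * Real.log (t - s)) := by
        nlinarith
      refine sub.trans ?_
      have k1 : Real.log (δ / 2 / (t - s)) ≤ δ / 2 / (t - s) - 1 :=
        Real.log_le_sub_one_of_pos (by positivity)
      rw [Real.log_div (by positivity) (by positivity), Real.log_div (by positivity) (by positivity)] at k1
      have k2 := mul_le_mul_of_nonneg_left k1 hr0.le
      have e : (t - s) * (δ / 2 / (t - s) - 1) = δ / 2 - (t - s) := by field_simp
      rw [e] at k2
      have k3 : Real.log δ ≤ - Real.log 2 := by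
        rw [← Real.log_inv]
        apply Real.log_le_log hδ0; linarith
      have k4 := Real.log_two_gt_d9
      nlinarith
    · -- phi s - phi t ≤ (t-s)/ln 2
      suffices h : phi s - phi t ≤ 2 / (Real.exp 1 * Real.log 2 * δ) * (t - s) by linarith
      have hA : phi s - phi t ≤ (t - s) / Real.log 2 := by
        rw [phi_eq, phi_eq, ← sub_div]
        apply div_le_div_of_nonneg_right _ l2.le
        have k1 : Real.log (t / s) ≤ t / s - 1 := Real.log_le_sub_one_of_pos (by positivity)
        rw [Real.log_div ht0.ne' hs.ne'] at k1
        have k2 := mul_le_mul_of_nonneg_left k1 hs.le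
        have e : s * (t / s - 1) = t - s := by field_simp
        have k3 : Real.log t ≤ 0 := Real.log_nonpos ht0.le ht
        nlinarith
      refine hA.trans ?_
      have hexp := Real.exp_one_lt_d9
      rw [div_mul_eq_mul_div, div_le_div_iff₀ l2 (by positivity)]
      have : Real.exp 1 * δ ≤ 2 := by nlinarith
      have h' : 0 ≤ (t - s) * Real.log 2 := mul_nonneg (by linarith) l2.le
      nlinarith

lemma phi_diff (s t δ : ℝ) (hs : 0 < s) (hs1 : s ≤ 1) (ht0 : 0 < t) (ht : t ≤ 1) (hδ0 : 0 < δ)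
    (hδ : δ < 1/2) :
    |phi s - phi t| ≤ phi δ + 2 / (Real.exp 1 * Real.log 2 * δ) * |s - t| := by
  rcases le_total s t with h | h
  · rw [abs_sub_comm s t, abs_of_nonneg (sub_nonneg.2 h)]
    exact phi_diff_lt s t δ hs h ht hδ0 hδ
  · rw [abs_sub_comm, abs_of_nonneg (sub_nonneg.2 h)]
    exact phi_diff_lt t s δ ht0 h hs1 hδ0 hδ

lemma cs_tsum {ι : Type*} (n G : ι → ℝ) (hn : ∀ i, 0 ≤ n i) (hG : ∀ i, 0 ≤ G i)
    (sn : Summable n) (sG : Summable fun i => n i * G i) :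
    Summable (fun i => n i * Real.sqrt (G i)) ∧
    ∑' i, n i * Real.sqrt (G i) ≤ Real.sqrt (∑' i, n i) * Real.sqrt (∑' i, n i * G i) := by
  have key : ∀ F : Finset ι, ∑ i ∈ F, n i * Real.sqrt (G i) ≤
      Real.sqrt (∑' i, n i) * Real.sqrt (∑' i, n i * G i) := by
    intro F
    have h := Real.sum_sqrt_mul_sqrt_le F (f := n) (g := fun i => n i * G i) hn
      (fun i => mul_nonneg (hn i) (hG i))
    calc _ = ∑ i ∈ F, Real.sqrt (n i) * Real.sqrt (n i * G i) := by
          apply Finset.sum_congr rfl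
          intro i _
          rw [Real.sqrt_mul (hn i), ← mul_assoc, Real.mul_self_sqrt (hn i)]
      _ ≤ _ := h
      _ ≤ _ := by
        gcongr
        · exact sn.sum_le_tsum F (fun i _ => hn i)
        · exact sG.sum_le_tsum F (fun i _ => mul_nonneg (hn i) (hG i))
  have h0 : ∀ i, 0 ≤ n i * Real.sqrt (G i) := fun i => mul_nonneg (hn i) (Real.sqrt_nonneg _)
  exact ⟨summable_of_sum_le h0 key, Real.tsum_le_of_sum_le h0 key⟩

lemma hasSum_of_ofReal {ι : Type*} {f : ι → ℝ} (hf : ∀ i, 0 ≤ f i) {r : ℝ} (hr : 0 ≤ r)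
    (h : ∑' i, ENNReal.ofReal (f i) = ENNReal.ofReal r) : HasSum f r := by
  have hs : Summable f := by
    have := ENNReal.summable_toReal (f := fun i => ENNReal.ofReal (f i))
      (by rw [h]; exact ENNReal.ofReal_ne_top)
    simpa [ENNReal.toReal_ofReal (hf _)] using this
  rw [← ENNReal.ofReal_tsum_of_nonneg hf hs, ENNReal.ofReal_eq_ofReal_iff (tsum_nonneg hf) hr] at h
  rw [← h]; exact hs.hasSum

lemma summable_of_ofReal {ι : Type*} {f : ι → ℝ} (hf : ∀ i, 0 ≤ f i)
    (h : ∑' i, ENNReal.ofReal (f i) ≠ ⊤) : Summable f := by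
  have := ENNReal.summable_toReal (f := fun i => ENNReal.ofReal (f i)) h
  simpa [ENNReal.toReal_ofReal (hf _)] using this

lemma sum_take (v : List ℕ) (f : List ℕ → ENNReal) :
    ∑ i ∈ Finset.range v.length, f (v.take i) = ∑' x, if x <+: v ∧ x ≠ v then f x else 0 := by
  classical
  rw [tsum_eq_sum (s := (Finset.range v.length).image (fun i => v.take i))]
  · rw [Finset.sum_image]
    · apply Finset.sum_congr rfl
      intro i hi
      rw [Finset.mem_range] at hi
      rw [if_pos]
      refine ⟨List.take_prefix _ _, fun h => ?_⟩
      have := congrArg List.length h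
      simp at this; omega
    · intro i hi j hj h
      have := congrArg List.length h
      simp at this hi hj; omega
  · intro x hx
    rw [if_neg]
    rintro ⟨h1, h2⟩
    apply hx
    rw [Finset.mem_image]
    refine ⟨x.length, ?_, (List.prefix_iff_eq_take.1 h1).symm⟩
    rw [Finset.mem_range]
    exact lt_of_le_of_ne h1.length_le (fun h => h2 (h1.eq_of_length h))

lemma sum_take_succ (v : List ℕ) (f : List ℕ → ENNReal) :
    ∑ i ∈ Finset.range v.length, f (v.take (i + 1)) =
      ∑' x, if x <+: v ∧ x ≠ [] then f x else 0 := by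
  classical
  rw [tsum_eq_sum (s := (Finset.range v.length).image (fun i => v.take (i + 1)))]
  · rw [Finset.sum_image]
    · apply Finset.sum_congr rfl
      intro i hi
      rw [Finset.mem_range] at hi
      rw [if_pos]
      refine ⟨List.take_prefix _ _, fun h => ?_⟩
      have := congrArg List.length h
      simp at this
      simp [this] at hi
    · intro i hi j hj h
      have := congrArg List.length h
      simp at this hi hj; omega
  · intro x hx
    rw [if_neg]
    rintro ⟨h1, h2⟩
    apply hx
    rw [Finset.mem_image]
    have h0 := List.length_pos_iff.2 h2
    refine ⟨x.length - 1, ?_, ?_⟩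
    · rw [Finset.mem_range]
      have := h1.length_le
      omega
    · rw [Nat.sub_add_cancel h0]
      exact (List.prefix_iff_eq_take.1 h1).symm

open Classical in
def wt (T : Set (List ℕ)) (P : List ℕ → ℝ) (v : List ℕ) : ENNReal :=
  if v ∈ bdry T then ENNReal.ofReal (P v) else 0

open Classical in
def emass (T : Set (List ℕ)) (P : List ℕ → ℝ) (x : List ℕ) : ENNReal :=
  ∑' v, if x <+: v then wt T P v else 0

lemma mass_nonneg {T : Set (List ℕ)} {P : List ℕ → ℝ} (hP : IsProbOn (bdry T) P) (x : List ℕ) :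
    0 ≤ mass T P x := tsum_nonneg (fun v => (hP.1 v v.2.1).le)

lemma cone_summable {T : Set (List ℕ)} {P : List ℕ → ℝ} (hP : IsProbOn (bdry T) P) (x : List ℕ) :
    Summable fun v : cone T x => P v := by
  have h := hP.2.summable
  exact h.comp_injective (i := fun v : cone T x => (⟨v.1, v.2.1⟩ : bdry T))
    (fun a b hab => by simpa [Subtype.ext_iff] using hab)

lemma ofReal_mass {T : Set (List ℕ)} {P : List ℕ → ℝ} (hP : IsProbOn (bdry T) P) (x : List ℕ) :
    ENNReal.ofReal (mass T P x) = emass T P x := by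
  classical
  unfold mass emass
  rw [ENNReal.ofReal_tsum_of_nonneg (fun v : cone T x => (hP.1 v v.2.1).le) (cone_summable hP x),
    tsum_subtype (cone T x) (fun v => ENNReal.ofReal (P v))]
  apply tsum_congr
  intro v
  by_cases h1 : x <+: v <;> by_cases h2 : v ∈ bdry T <;> simp [Set.indicator, cone, wt, h1, h2]

lemma prefix_mem {T : Set (List ℕ)} (hT : IsTree T) {x v : List ℕ} (hv : v ∈ bdry T)
    (h : x <+: v) : x ∈ T := hT.2 v hv.1 x h

lemma prefix_intr {T : Set (List ℕ)} (hT : IsTree T) {x v : List ℕ} (hv : v ∈ bdry T)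
    (h : x <+: v) (hne : x ≠ v) : x ∈ intr T := by
  refine ⟨prefix_mem hT hv h, fun hx => ?_⟩
  obtain ⟨t, rfl⟩ := h
  cases t with
  | nil => simp at hne
  | cons n t =>
    have : x ++ [n] ∈ succs T x := ⟨hT.2 _ hv.1 _ ⟨t, by simp⟩, n, rfl⟩
    rw [hx.2] at this
    exact this

lemma succs_iff {T : Set (List ℕ)} (x y : List ℕ) :
    y ∈ succs T x ↔ y ∈ T ∧ y ≠ [] ∧ x = y.dropLast := by
  constructor
  · rintro ⟨h, n, rfl⟩
    simp [h]
  · rintro ⟨h, h1, rfl⟩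
    exact ⟨h, y.getLast h1, (List.dropLast_append_getLast h1).symm⟩

lemma succs_intr {T : Set (List ℕ)} (hT : IsTree T) {x y : List ℕ} (h : y ∈ succs T x) :
    x ∈ intr T := by
  refine ⟨?_, fun hx => ?_⟩
  · obtain ⟨h, n, rfl⟩ := h
    exact hT.2 _ h _ ⟨[n], rfl⟩
  · rw [hx.2] at h; exact h

lemma em_zero {T : Set (List ℕ)} (hT : IsTree T) (P : List ℕ → ℝ) {x : List ℕ} (h : x ∉ T) :
    emass T P x = 0 := by
  classical
  unfold emass
  rw [ENNReal.tsum_eq_zero]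
  intro v
  by_cases hx : x <+: v
  · rw [if_pos hx, wt, if_neg]
    intro hv; exact h (prefix_mem hT hv hx)
  · rw [if_neg hx]

lemma leaf_sum_eq {T : Set (List ℕ)} (P : List ℕ → ℝ)
    (hP : IsProbOn (bdry T) P)
    (sel : ℕ → ℕ) (f : List ℕ → ℝ) (hf : ∀ v ∈ bdry T, ∀ i < v.length, 0 ≤ f (v.take (sel i))) :
    ∑' v : bdry T, ENNReal.ofReal (P v * ∑ i ∈ Finset.range (v : List ℕ).length,
        f ((v : List ℕ).take (sel i))) =
    ∑' v, wt T P v * ∑ i ∈ Finset.range v.length, ENNReal.ofReal (f (v.take (sel i))) := by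
  classical
  rw [tsum_subtype (bdry T) (fun v => ENNReal.ofReal (P v * ∑ i ∈ Finset.range (v : List ℕ).length,
        f ((v : List ℕ).take (sel i))))]
  apply tsum_congr
  intro v
  by_cases hv : v ∈ bdry T
  · rw [Set.indicator_of_mem hv, wt, if_pos hv, ENNReal.ofReal_mul (hP.1 v hv).le,
      ENNReal.ofReal_sum_of_nonneg]
    intro i hi
    exact hf v hv i (Finset.mem_range.1 hi)
  · simp [wt, hv]

lemma vertex_enn {T : Set (List ℕ)} (hT : IsTree T) {P : List ℕ → ℝ}
    (hP : IsProbOn (bdry T) P) (f : List ℕ → ℝ) (hf : ∀ x ∈ intr T, 0 ≤ f x) :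
    ∑' v : bdry T, ENNReal.ofReal (P v * ∑ i ∈ Finset.range (v : List ℕ).length,
        f ((v : List ℕ).take i)) =
    ∑' x : intr T, ENNReal.ofReal (mass T P x * f x) := by
  classical
  have := leaf_sum_eq P hP (fun i => i) f (fun v hv i hi => by
    apply hf
    apply prefix_intr hT hv (List.take_prefix _ _)
    intro h
    have := congrArg List.length h
    simp at this; omega)
  rw [this, tsum_subtype (intr T) (fun x => ENNReal.ofReal (mass T P x * f x))]
  simp_rw [sum_take _ (fun x => ENNReal.ofReal (f x)), ← ENNReal.tsum_mul_left]
  rw [ENNReal.tsum_comm]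
  apply tsum_congr
  intro x
  by_cases hx : x ∈ intr T
  · rw [Set.indicator_of_mem hx, ENNReal.ofReal_mul (mass_nonneg hP x), ofReal_mass hP, emass,
      ← ENNReal.tsum_mul_right]
    apply tsum_congr
    intro v
    by_cases hv : v ∈ bdry T
    · have : x ≠ v := fun h => hx.2 (h ▸ hv)
      by_cases h2 : x <+: v <;> simp [this, h2]
    · simp [wt, hv]
  · rw [Set.indicator_of_notMem hx, ENNReal.tsum_eq_zero]
    intro v
    by_cases hv : v ∈ bdry T
    · rw [if_neg, mul_zero]
      exact fun h => hx (prefix_intr hT hv h.1 h.2)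
    · simp [wt, hv]

lemma edge_enn {T : Set (List ℕ)} (hT : IsTree T) {P : List ℕ → ℝ}
    (hP : IsProbOn (bdry T) P) (f : List ℕ → ℝ) (hf : ∀ y ∈ T, y ≠ [] → 0 ≤ f y) :
    ∑' v : bdry T, ENNReal.ofReal (P v * ∑ i ∈ Finset.range (v : List ℕ).length,
        f ((v : List ℕ).take (i + 1))) =
    ∑' x : intr T, ∑' y : succs T x, ENNReal.ofReal (mass T P y * f y) := by
  classical
  have := leaf_sum_eq P hP (fun i => i + 1) f (fun v hv i hi => by
    apply hf
    · exact prefix_mem hT hv (List.take_prefix _ _)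
    · intro h
      have := congrArg List.length h
      simp at this
      simp [this] at hi)
  rw [this, tsum_subtype (intr T) (fun x => ∑' y : succs T x, ENNReal.ofReal (mass T P y * f y))]
  simp_rw [sum_take_succ _ (fun x => ENNReal.ofReal (f x)), ← ENNReal.tsum_mul_left]
  rw [ENNReal.tsum_comm]
  have e2 : ∀ x, (intr T).indicator
      (fun x => ∑' y : succs T x, ENNReal.ofReal (mass T P y * f y)) x =
      ∑' y, if x = y.dropLast then
        (if y ∈ T ∧ y ≠ [] then ENNReal.ofReal (mass T P y * f y) else 0) else 0 := by
    intro x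
    by_cases hx : x ∈ intr T
    · rw [Set.indicator_of_mem hx, tsum_subtype (succs T x)
        (fun y => ENNReal.ofReal (mass T P y * f y))]
      apply tsum_congr
      intro y
      simp only [Set.indicator, succs_iff]
      by_cases h1 : y ∈ T <;> by_cases h2 : y = [] <;> by_cases h3 : x = y.dropLast <;>
        simp [h1, h2, h3]
    · rw [Set.indicator_of_notMem hx, eq_comm, ENNReal.tsum_eq_zero]
      intro y
      by_cases h : x = y.dropLast
      · rw [if_pos h, if_neg]
        intro h'
        exact hx (succs_intr hT ((succs_iff x y).2 ⟨h'.1, h'.2, h⟩))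
      · rw [if_neg h]
  simp_rw [e2]
  rw [ENNReal.tsum_comm (f := fun x y => if x = y.dropLast then
        (if y ∈ T ∧ y ≠ [] then ENNReal.ofReal (mass T P y * f y) else 0) else 0)]
  apply tsum_congr
  intro y
  rw [tsum_ite_eq]
  by_cases h1 : y ∈ T
  · by_cases h2 : y = []
    · simp [h2]
    · rw [if_pos ⟨h1, h2⟩, ENNReal.ofReal_mul (mass_nonneg hP y), ofReal_mass hP, emass,
        ← ENNReal.tsum_mul_right]
      apply tsum_congr
      intro v
      by_cases h : y <+: v <;> simp [h, h2]
  · rw [if_neg (fun h => h1 h.1), ENNReal.tsum_eq_zero]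
    intro v
    by_cases hv : v ∈ bdry T
    · rw [if_neg, mul_zero]
      exact fun h => h1 (prefix_mem hT hv h.1)
    · simp [wt, hv]

lemma em_succs {T : Set (List ℕ)} (hT : IsTree T) (P : List ℕ → ℝ) {x : List ℕ}
    (hx : x ∈ intr T) : ∑' y : succs T x, emass T P y = emass T P x := by
  classical
  rw [tsum_subtype (succs T x) (fun y => emass T P y)]
  have : ∀ y, (succs T x).indicator (fun y => emass T P y) y =
      ∑' v, if y ∈ succs T x ∧ y <+: v then wt T P v else 0 := by
    intro y
    by_cases hy : y ∈ succs T x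
    · rw [Set.indicator_of_mem hy]; simp [emass, hy]
    · rw [Set.indicator_of_notMem hy]; simp [hy]
  simp_rw [this]
  rw [ENNReal.tsum_comm, emass]
  apply tsum_congr
  intro v
  by_cases hv : v ∈ bdry T
  · by_cases hxv : x <+: v
    · rw [if_pos hxv]
      obtain ⟨t, rfl⟩ := hxv
      cases t with
      | nil => simp at hv; exact absurd hv hx.2
      | cons n t =>
        have key : ∀ y, (y ∈ succs T x ∧ y <+: x ++ n :: t) ↔ y = x ++ [n] := by
          intro y
          constructor
          · rintro ⟨⟨_, m, rfl⟩, h2⟩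
            rw [List.prefix_append_right_inj] at h2
            obtain ⟨s, hs⟩ := h2
            simp at hs
            rw [hs.1]
          · rintro rfl
            have : x ++ [n] <+: x ++ n :: t := ⟨t, by simp⟩
            exact ⟨⟨prefix_mem hT hv this, n, rfl⟩, this⟩
        simp only [key]
        rw [tsum_ite_eq]
    · rw [if_neg hxv, ENNReal.tsum_eq_zero]
      intro y
      rw [if_neg]
      rintro ⟨⟨_, n, rfl⟩, h⟩
      exact hxv ((List.prefix_append x [n]).trans h)
  · simp [wt, hv]

lemma mass_succs {T : Set (List ℕ)} (hT : IsTree T) {P : List ℕ → ℝ}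
    (hP : IsProbOn (bdry T) P) {x : List ℕ}
    (hx : x ∈ intr T) : HasSum (fun y : succs T x => mass T P y) (mass T P x) := by
  apply hasSum_of_ofReal (fun y : succs T x => mass_nonneg hP y) (mass_nonneg hP x)
  simp_rw [ofReal_mass hP]
  exact em_succs hT P hx

lemma exists_leaf {T : Set (List ℕ)} (hT : IsTree T) (hG : NoInfGeo T) {x : List ℕ} (hx : x ∈ T) :
    ∃ v ∈ bdry T, x <+: v := by
  by_contra hcon
  push Not at hcon
  have step : ∀ y : {y : List ℕ // y ∈ T ∧ x <+: y}, ∃ z : {y : List ℕ // y ∈ T ∧ x <+: y},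
      ∃ n, z.1 = y.1 ++ [n] := by
    rintro ⟨y, hy, hxy⟩
    have : succs T y ≠ ∅ := fun h => hcon y ⟨hy, h⟩ hxy
    obtain ⟨z, hz, n, rfl⟩ := Set.nonempty_iff_ne_empty.2 this
    exact ⟨⟨_, hz, hxy.trans (List.prefix_append _ _)⟩, n, rfl⟩
  choose st hst using step
  let s : ℕ → {y : List ℕ // y ∈ T ∧ x <+: y} := fun n => st^[n] ⟨x, hx, List.prefix_rfl⟩
  have hs : ∀ n, ∃ k, (s (n + 1)).1 = (s n).1 ++ [k] := by
    intro n
    simp only [s, Function.iterate_succ_apply']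
    exact hst _
  have hlen : ∀ n, (s n).1.length = x.length + n := by
    intro n
    induction n with
    | zero => simp [s]
    | succ n ih =>
      obtain ⟨k, hk⟩ := hs n
      rw [hk]; simp [ih]; omega
  have hpre : ∀ n m, n ≤ m → (s n).1 <+: (s m).1 := by
    intro n m h
    induction m, h using Nat.le_induction with
    | base => exact List.prefix_rfl
    | succ m _ ih =>
      obtain ⟨k, hk⟩ := hs m
      rw [hk]; exact ih.trans (List.prefix_append _ _)
  apply hG
  refine ⟨fun i => (s (i + 1)).1.getD i 0, fun n => ?_⟩
  have : (List.ofFn fun i : Fin n => (s (i + 1)).1.getD i 0) = (s n).1.take n := by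
    apply List.ext_getElem
    · simp [hlen]
    · intro i h1 h2
      simp at h1
      have hi : i < (s (i + 1)).1.length := by rw [hlen]; omega
      simp only [List.getElem_ofFn, List.getElem_take]
      rw [List.getD_eq_getElem _ _ hi]
      exact (hpre (i + 1) n h1).getElem hi
  rw [this]
  exact hT.2 _ (s n).2.1 _ (List.take_prefix _ _)

lemma mass_pos {T : Set (List ℕ)} (hT : IsTree T) (hG : NoInfGeo T) {P : List ℕ → ℝ}
    (hP : IsProbOn (bdry T) P) {x : List ℕ} (hx : x ∈ T) : 0 < mass T P x := by
  obtain ⟨v, hv, hxv⟩ := exists_leaf hT hG hx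
  exact (cone_summable hP x).tsum_pos (fun v => (hP.1 v v.2.1).le) ⟨v, hv, hxv⟩ (hP.1 v hv)

lemma mass_leaf {T : Set (List ℕ)} (hT : IsTree T) (P : List ℕ → ℝ) {v : List ℕ}
    (hv : v ∈ bdry T) : mass T P v = P v := by
  have : cone T v = {v} := by
    ext w
    constructor
    · rintro ⟨h1, h2⟩
      by_contra hne
      exact (prefix_intr hT h1 h2 (fun h => hne h.symm)).2 hv
    · rintro rfl
      exact ⟨hv, List.prefix_rfl⟩
  unfold mass
  rw [this, tsum_singleton v (fun v => P v)]

lemma mass_root {T : Set (List ℕ)} {P : List ℕ → ℝ}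
    (hP : IsProbOn (bdry T) P) : mass T P [] = 1 := by
  have : cone T [] = bdry T := by
    ext w; simp [cone]
  unfold mass
  rw [this]
  exact hP.2.tsum_eq

lemma vertex_hasSum {T : Set (List ℕ)} (hT : IsTree T) {P : List ℕ → ℝ}
    (hP : IsProbOn (bdry T) P) (f : List ℕ → ℝ) (hf : ∀ x ∈ intr T, 0 ≤ f x)
    (hs : Summable fun v : bdry T => lenWt f v * P v) :
    HasSum (fun x : intr T => mass T P x * f x) (expLen T f P) := by
  have hl : ∀ v : bdry T, 0 ≤ lenWt f v := by
    intro v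
    apply Finset.sum_nonneg
    intro i hi
    apply hf
    apply prefix_intr hT v.2 (List.take_prefix _ _)
    intro h
    have := congrArg List.length h
    simp at this hi; omega
  have h0 : ∀ v : bdry T, 0 ≤ lenWt f v * P v := fun v => mul_nonneg (hl v) (hP.1 v v.2).le
  apply hasSum_of_ofReal (fun x : intr T => mul_nonneg (mass_nonneg hP x) (hf x x.2))
    (tsum_nonneg h0)
  rw [← vertex_enn hT hP f hf, ENNReal.ofReal_tsum_of_nonneg h0 hs]
  apply tsum_congr
  intro v
  rw [mul_comm]; rfl

lemma edge_nonneg {T : Set (List ℕ)} (hT : IsTree T) {P : List ℕ → ℝ}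
    (hP : IsProbOn (bdry T) P) (f : List ℕ → ℝ) (hf : ∀ y ∈ T, y ≠ [] → 0 ≤ f y) (v : bdry T) :
    0 ≤ P v * ∑ i ∈ Finset.range (v : List ℕ).length, f ((v : List ℕ).take (i + 1)) := by
  apply mul_nonneg (hP.1 v v.2).le
  apply Finset.sum_nonneg
  intro i hi
  apply hf
  · exact prefix_mem hT v.2 (List.take_prefix _ _)
  · intro h
    have := congrArg List.length h
    simp at this
    simp [this] at hi

lemma edge_hasSum {T : Set (List ℕ)} (hT : IsTree T) {P : List ℕ → ℝ}
    (hP : IsProbOn (bdry T) P) (f : List ℕ → ℝ) (hf : ∀ y ∈ T, y ≠ [] → 0 ≤ f y)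
    (hs : Summable fun v : bdry T => P v * ∑ i ∈ Finset.range (v : List ℕ).length,
        f ((v : List ℕ).take (i + 1))) :
    (∀ x ∈ intr T, Summable fun y : succs T x => mass T P y * f y) ∧
    HasSum (fun x : intr T => ∑' y : succs T x, mass T P y * f y)
      (∑' v : bdry T, P v * ∑ i ∈ Finset.range (v : List ℕ).length,
        f ((v : List ℕ).take (i + 1))) := by
  have h0 := edge_nonneg hT hP f hf
  have hy : ∀ x, ∀ y : succs T x, 0 ≤ mass T P y * f y := fun x y =>
    mul_nonneg (mass_nonneg hP y) (hf y y.2.1 ((succs_iff x y).1 y.2).2.1)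
  have e := edge_enn hT hP f hf
  rw [← ENNReal.ofReal_tsum_of_nonneg h0 hs] at e
  have sm : ∀ x ∈ intr T, Summable fun y : succs T x => mass T P y * f y := by
    intro x hx
    apply summable_of_ofReal (hy x)
    have : ∑' x : intr T, ∑' y : succs T x, ENNReal.ofReal (mass T P y * f y) ≠ ⊤ := by
      rw [← e]; exact ENNReal.ofReal_ne_top
    exact ENNReal.ne_top_of_tsum_ne_top this ⟨x, hx⟩
  refine ⟨sm, ?_⟩
  apply hasSum_of_ofReal (fun x : intr T => tsum_nonneg (hy x)) (tsum_nonneg h0)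
  rw [e]
  apply tsum_congr
  intro x
  exact ENNReal.ofReal_tsum_of_nonneg (hy x) (sm x x.2)

lemma edge_summable {T : Set (List ℕ)} (hT : IsTree T) {P : List ℕ → ℝ}
    (hP : IsProbOn (bdry T) P) (f : List ℕ → ℝ) (hf : ∀ y ∈ T, y ≠ [] → 0 ≤ f y)
    (sm : ∀ x ∈ intr T, Summable fun y : succs T x => mass T P y * f y)
    (hs : Summable (fun x : intr T => ∑' y : succs T x, mass T P y * f y)) :
    Summable fun v : bdry T => P v * ∑ i ∈ Finset.range (v : List ℕ).length,
        f ((v : List ℕ).take (i + 1)) := by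
  have h0 := edge_nonneg hT hP f hf
  have hy : ∀ x, ∀ y : succs T x, 0 ≤ mass T P y * f y := fun x y =>
    mul_nonneg (mass_nonneg hP y) (hf y y.2.1 ((succs_iff x y).1 y.2).2.1)
  apply summable_of_ofReal h0
  rw [edge_enn hT hP f hf]
  have : ∑' x : intr T, ∑' y : succs T x, ENNReal.ofReal (mass T P y * f y) =
      ENNReal.ofReal (∑' x : intr T, ∑' y : succs T x, mass T P y * f y) := by
    rw [ENNReal.ofReal_tsum_of_nonneg (fun x : intr T => tsum_nonneg (hy x)) hs]
    apply tsum_congr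
    intro x
    exact (ENNReal.ofReal_tsum_of_nonneg (hy x) (sm x x.2)).symm
  rw [this]; exact ENNReal.ofReal_ne_top

lemma tele {T : Set (List ℕ)} (hT : IsTree T) (hG : NoInfGeo T) {P : List ℕ → ℝ}
    (hP : IsProbOn (bdry T) P) {v : List ℕ} (hv : v ∈ bdry T) :
    ∑ i ∈ Finset.range v.length, Real.log (fwd T P (v.take (i + 1)).dropLast (v.take (i + 1)))
      = Real.log (P v) := by
  have h : ∀ i ∈ Finset.range v.length,
      Real.log (fwd T P (v.take (i + 1)).dropLast (v.take (i + 1))) =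
      Real.log (mass T P (v.take (i + 1))) - Real.log (mass T P (v.take i)) := by
    intro i hi
    rw [Finset.mem_range] at hi
    have : (v.take (i + 1)).dropLast = v.take i := by
      rw [List.dropLast_eq_take, List.length_take, List.take_take]
      congr 1; omega
    rw [this, fwd, Real.log_div]
    · exact (mass_pos hT hG hP (prefix_mem hT hv (List.take_prefix _ _))).ne'
    · exact (mass_pos hT hG hP (prefix_mem hT hv (List.take_prefix _ _))).ne'
  rw [Finset.sum_congr rfl h, Finset.sum_range_sub (fun i => Real.log (mass T P (v.take i)))]
  simp [mass_root hP, mass_leaf hT P hv]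

lemma fwd_pos {T : Set (List ℕ)} (hT : IsTree T) (hG : NoInfGeo T) {P : List ℕ → ℝ}
    (hP : IsProbOn (bdry T) P) {x y : List ℕ} (hy : y ∈ succs T x) : 0 < fwd T P x y :=
  div_pos (mass_pos hT hG hP hy.1) (mass_pos hT hG hP (succs_intr hT hy).1)

lemma fwd_hasSum {T : Set (List ℕ)} (hT : IsTree T) (hG : NoInfGeo T) {P : List ℕ → ℝ}
    (hP : IsProbOn (bdry T) P) {x : List ℕ} (hx : x ∈ intr T) :
    HasSum (fun y : succs T x => fwd T P x y) 1 := by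
  have := (mass_succs hT hP hx).div_const (mass T P x)
  rwa [div_self (mass_pos hT hG hP hx.1).ne'] at this

lemma fwd_le_one {T : Set (List ℕ)} (hT : IsTree T) (hG : NoInfGeo T) {P : List ℕ → ℝ}
    (hP : IsProbOn (bdry T) P) {x y : List ℕ} (hy : y ∈ succs T x) : fwd T P x y ≤ 1 := by
  have h := fwd_hasSum hT hG hP (succs_intr hT hy)
  exact le_hasSum h ⟨y, hy⟩ (fun z _ => (fwd_pos hT hG hP z.2).le)

lemma entropy_hasSum {T : Set (List ℕ)} (hT : IsTree T) (hG : NoInfGeo T) {P : List ℕ → ℝ}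
    (hP : IsProbOn (bdry T) P) (hH : Summable fun v : bdry T => phi (P v)) :
    (∀ x ∈ intr T, Summable fun y : succs T x => phi (fwd T P x y)) ∧
    HasSum (fun x : intr T => mass T P x * Hloc T P x) (∑' v : bdry T, phi (P v)) := by
  set f : List ℕ → ℝ := fun y => -Real.log (fwd T P y.dropLast y) / Real.log 2 with hfdef
  have hf : ∀ y ∈ T, y ≠ [] → 0 ≤ f y := by
    intro y hy hne
    have hys : y ∈ succs T y.dropLast := (succs_iff _ _).2 ⟨hy, hne, rfl⟩
    apply div_nonneg _ log2_pos.le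
    have := Real.log_nonpos (fwd_pos hT hG hP hys).le (fwd_le_one hT hG hP hys)
    linarith
  have e : ∀ v : bdry T, P v * ∑ i ∈ Finset.range (v : List ℕ).length,
        f ((v : List ℕ).take (i + 1)) = phi (P v) := by
    intro v
    rw [phi_eq, hfdef]
    simp only
    rw [← Finset.sum_div, Finset.sum_neg_distrib, tele hT hG hP v.2]
    ring
  have h := edge_hasSum hT hP f hf (by simpa only [e] using hH)
  simp only [e] at h
  have e2 : ∀ x ∈ intr T, ∀ y : succs T x,
      mass T P y * f y = mass T P x * phi (fwd T P x y) := by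
    intro x hx y
    have hm := (mass_pos hT hG hP hx.1).ne'
    have : x = (y : List ℕ).dropLast := ((succs_iff x y).1 y.2).2.2
    rw [phi_eq, hfdef]
    simp only
    rw [← this]
    have h3 : mass T P y = mass T P x * fwd T P x y := by
      unfold fwd; field_simp
    rw [h3]; ring
  refine ⟨fun x hx => ?_, ?_⟩
  · have := h.1 x hx
    simp only [e2 x hx] at this
    exact (summable_mul_left_iff (mass_pos hT hG hP hx.1).ne').1 this
  · convert h.2 using 2 with x
    simp only [e2 x x.2]
    rw [tsum_mul_left]; rfl

/-- local divergence (in nats) -/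
def Gloc (T : Set (List ℕ)) (P Q : List ℕ → ℝ) (x : List ℕ) : ℝ :=
  ∑' y : succs T x, (fwd T P x y * Real.log (fwd T P x y / fwd T Q x y)
    + fwd T Q x y - fwd T P x y)

lemma gterm_nonneg {p q : ℝ} (hp : 0 < p) (hq : 0 < q) : 0 ≤ p * Real.log (p / q) + q - p := by
  have h := Real.log_le_sub_one_of_pos (div_pos hq hp)
  rw [← inv_div, Real.log_inv] at h
  have h2 := mul_le_mul_of_nonneg_left h hp.le
  have e : p * ((p / q)⁻¹ - 1) = q - p := by field_simp
  linarith

lemma diverg_hasSum {T : Set (List ℕ)} (hT : IsTree T) (hG : NoInfGeo T) {P Q : List ℕ → ℝ}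
    (hP : IsProbOn (bdry T) P) (hQ : IsProbOn (bdry T) Q)
    (hn : HasSum (fun x : intr T => mass T P x) (expLen T (fun _ => 1) P))
    (hL : Summable fun v : bdry T => ((v : List ℕ).length : ℝ) * P v)
    (hD : Summable fun v : bdry T => |P v * Real.logb 2 (P v / Q v)|) :
    (∀ x ∈ intr T, Summable fun y : succs T x =>
      (fwd T P x y * Real.log (fwd T P x y / fwd T Q x y) + fwd T Q x y - fwd T P x y)) ∧
    HasSum (fun x : intr T => mass T P x * Gloc T P Q x)
      (Real.log 2 * ∑' v : bdry T, P v * Real.logb 2 (P v / Q v)) := by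
  -- ratio function
  set g : List ℕ → ℝ := fun y => fwd T Q y.dropLast y / fwd T P y.dropLast y with hg
  set f : List ℕ → ℝ := fun y => Real.log (fwd T P y.dropLast y) - Real.log (fwd T Q y.dropLast y)
    + (g y - 1) with hfdef
  have hgpos : ∀ y ∈ T, y ≠ [] → 0 ≤ g y := by
    intro y hy hne
    have hys : y ∈ succs T y.dropLast := (succs_iff _ _).2 ⟨hy, hne, rfl⟩
    exact (div_pos (fwd_pos hT hG hQ hys) (fwd_pos hT hG hP hys)).le
  have key : ∀ x ∈ intr T, ∀ y : succs T x, mass T P y * f y = mass T P x *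
      (fwd T P x y * Real.log (fwd T P x y / fwd T Q x y) + fwd T Q x y - fwd T P x y) := by
    intro x hx y
    have hm := (mass_pos hT hG hP hx.1).ne'
    have : x = (y : List ℕ).dropLast := ((succs_iff x y).1 y.2).2.2
    have hp := fwd_pos hT hG hP y.2
    have hq := fwd_pos hT hG hQ y.2
    simp only [hfdef, hg]
    rw [← this, Real.log_div hp.ne' hq.ne']
    have h3 : mass T P y = mass T P x * fwd T P x y := by
      unfold fwd; field_simp
    rw [h3]
    field_simp
    ring
  have hf : ∀ y ∈ T, y ≠ [] → 0 ≤ f y := by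
    intro y hy hne
    have hys : y ∈ succs T y.dropLast := (succs_iff _ _).2 ⟨hy, hne, rfl⟩
    have hp := fwd_pos hT hG hP hys
    have hq := fwd_pos hT hG hQ hys
    have k := key _ (succs_intr hT hys) ⟨y, hys⟩
    have m1 := mass_pos hT hG hP hy
    have m2 := mass_pos hT hG hP (succs_intr hT hys).1
    have : 0 ≤ mass T P y * f y := by
      rw [k]; exact mul_nonneg m2.le (gterm_nonneg hp hq)
    exact nonneg_of_mul_nonneg_right this m1
  have keyg : ∀ x ∈ intr T, ∀ y : succs T x, mass T P y * g y = mass T P x * fwd T Q x y := by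
    intro x hx y
    have hm := (mass_pos hT hG hP hx.1).ne'
    have : x = (y : List ℕ).dropLast := ((succs_iff x y).1 y.2).2.2
    have hp := fwd_pos hT hG hP y.2
    simp only [hg]
    rw [← this]
    have h3 : mass T P y = mass T P x * fwd T P x y := by
      unfold fwd; field_simp
    rw [h3]
    field_simp
  have sg1 : ∀ x ∈ intr T, Summable fun y : succs T x => mass T P y * g y := by
    intro x hx
    simp only [keyg x hx]
    exact (fwd_hasSum hT hG hQ hx).summable.mul_left _
  have sgv : ∀ x : intr T, ∑' y : succs T x, mass T P y * g y = mass T P x := by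
    intro x
    simp only [keyg x x.2]
    rw [tsum_mul_left, (fwd_hasSum hT hG hQ x.2).tsum_eq, mul_one]
  have sg := edge_summable hT hP g hgpos sg1 (by simp only [sgv]; exact hn.summable)
  have sgsum := (edge_hasSum hT hP g hgpos sg).2
  simp only [sgv] at sgsum
  have sgval := sgsum.unique hn
  have hsumg : HasSum _ _ := sg.hasSum
  rw [sgval] at hsumg
  have hlen : HasSum (fun v : bdry T => ((v : List ℕ).length : ℝ) * P v)
      (expLen T (fun _ => 1) P) := by
    have : expLen T (fun _ => 1) P = ∑' v : bdry T, ((v : List ℕ).length : ℝ) * P v := by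
      simp [expLen, lenWt]
    rw [this]; exact hL.hasSum
  have hDs : Summable fun v : bdry T => P v * Real.logb 2 (P v / Q v) := hD.of_abs
  have e : ∀ v : bdry T, P v * ∑ i ∈ Finset.range (v : List ℕ).length,
        f ((v : List ℕ).take (i + 1)) = Real.log 2 * (P v * Real.logb 2 (P v / Q v)) +
        (P v * ∑ i ∈ Finset.range (v : List ℕ).length,
        g ((v : List ℕ).take (i + 1)) - ((v : List ℕ).length : ℝ) * P v) := by
    intro v
    have l2 := log2_pos.ne'
    simp only [hfdef]
    rw [Finset.sum_add_distrib, Finset.sum_sub_distrib, Finset.sum_sub_distrib,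
      tele hT hG hP v.2, tele hT hG hQ v.2, Real.logb,
      Real.log_div (hP.1 v v.2).ne' (hQ.1 v v.2).ne']
    simp only [Finset.sum_const, Finset.card_range, nsmul_eq_mul, mul_one]
    field_simp
    try ring
  have hfs := (hDs.hasSum.mul_left (Real.log 2)).add (hsumg.sub hlen)
  simp only [← e, sub_self, add_zero] at hfs
  have h := edge_hasSum hT hP f hf hfs.summable
  rw [hfs.tsum_eq] at h
  refine ⟨fun x hx => ?_, ?_⟩
  · have := h.1 x hx
    simp only [key x hx] at this
    exact (summable_mul_left_iff (mass_pos hT hG hP hx.1).ne').1 this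
  · convert h.2 using 2 with x
    simp only [key x x.2]
    rw [tsum_mul_left]; rfl

lemma prefix_intr' {T : Set (List ℕ)} (hT : IsTree T) {x v : List ℕ} (hv : v ∈ T)
    (h : x <+: v) (hne : x ≠ v) : x ∈ intr T := by
  refine ⟨hT.2 v hv x h, fun hx => ?_⟩
  obtain ⟨t, rfl⟩ := h
  cases t with
  | nil => simp at hne
  | cons n t =>
    have : x ++ [n] ∈ succs T x := ⟨hT.2 _ hv _ ⟨t, by simp⟩, n, rfl⟩
    rw [hx.2] at this
    exact this

lemma mem_sub_iff {S : Set (List ℕ)} (x : List ℕ) :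
    x ∈ intr (subTreeOf S) ↔ ∃ s ∈ S, x <+: s ∧ x ≠ s := by
  constructor
  · rintro ⟨h1, h2⟩
    have : succs (subTreeOf S) x ≠ ∅ := fun h => h2 ⟨h1, h⟩
    obtain ⟨y, ⟨s, hs, hys⟩, n, rfl⟩ := Set.nonempty_iff_ne_empty.2 this
    refine ⟨s, hs, (List.prefix_append _ _).trans hys, ?_⟩
    rintro rfl
    have := hys.length_le
    simp at this
  · rintro ⟨s, hs, h, hne⟩
    refine ⟨⟨s, hs, h⟩, fun hx => ?_⟩
    obtain ⟨t, rfl⟩ := h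
    cases t with
    | nil => simp at hne
    | cons n t =>
      have : x ++ [n] ∈ succs (subTreeOf S) x := ⟨⟨_, hs, ⟨t, by simp⟩⟩, n, rfl⟩
      rw [hx.2] at this
      exact this

open Classical in
lemma cross_em {T : Set (List ℕ)} (hT : IsTree T) (hG : NoInfGeo T) {P : List ℕ → ℝ}
    (S : Set (List ℕ)) (hST : S ⊆ T)
    (hS : ∀ v ∈ bdry T, ∃! s : List ℕ, s ∈ S ∧ s <+: v) (x : List ℕ) :
    (∑' s, if s ∈ S ∧ x <+: s ∧ x ≠ s then emass T P s else 0) =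
      if x ∈ intr (subTreeOf S) then emass T P x else 0 := by
  by_cases hx : x ∈ intr (subTreeOf S)
  · rw [if_pos hx]
    have e : ∀ s, (if s ∈ S ∧ x <+: s ∧ x ≠ s then emass T P s else 0) =
        ∑' v, if (s ∈ S ∧ x <+: s ∧ x ≠ s) ∧ s <+: v then wt T P v else 0 := by
      intro s
      by_cases h : s ∈ S ∧ x <+: s ∧ x ≠ s
      · rw [if_pos h]
        unfold emass
        apply tsum_congr
        intro v
        simp [h]
      · rw [if_neg h]; simp [h]
    simp_rw [e]
    rw [ENNReal.tsum_comm]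
    unfold emass
    apply tsum_congr
    intro v
    by_cases hv : v ∈ bdry T
    · by_cases hxv : x <+: v
      · rw [if_pos hxv]
        obtain ⟨s, ⟨hs, hsv⟩, huniq⟩ := hS v hv
        obtain ⟨s0, hs0, hxs0, hne0⟩ := (mem_sub_iff x).1 hx
        have key : ∀ s', ((s' ∈ S ∧ x <+: s' ∧ x ≠ s') ∧ s' <+: v) ↔ s' = s := by
          intro s'
          constructor
          · rintro ⟨⟨h1, _, _⟩, h2⟩
            exact huniq s' ⟨h1, h2⟩
          · rintro rfl
            refine ⟨⟨hs, ?_⟩, hsv⟩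
            by_contra hcon
            have hsx : s' <+: x := by
              rcases List.prefix_or_prefix_of_prefix hxv hsv with h | h
              · by_cases he : x = s'
                · rw [he]
                · exact absurd ⟨h, he⟩ hcon
              · exact h
            obtain ⟨w, hw, hsw⟩ := exists_leaf hT hG (hST hs0)
            have heq := (hS w hw).unique ⟨hs, hsx.trans (hxs0.trans hsw)⟩ ⟨hs0, hsw⟩
            subst heq
            exact hne0 (hxs0.eq_of_length (le_antisymm hxs0.length_le hsx.length_le))
        simp only [key]
        rw [tsum_ite_eq]
      · rw [if_neg hxv, ENNReal.tsum_eq_zero]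
        intro s
        rw [if_neg]
        rintro ⟨⟨_, h1, _⟩, h2⟩
        exact hxv (h1.trans h2)
    · simp [wt, hv]
  · rw [if_neg hx, ENNReal.tsum_eq_zero]
    intro s
    rw [if_neg]
    rintro ⟨h1, h2, h3⟩
    exact hx ((mem_sub_iff x).2 ⟨s, h1, h2, h3⟩)

open Classical in
lemma cross_enn {T : Set (List ℕ)} (hT : IsTree T) (hG : NoInfGeo T) {P : List ℕ → ℝ}
    (hP : IsProbOn (bdry T) P) (ℓ : List ℕ → ℝ) (hℓ : ∀ x ∈ intr T, 0 < ℓ x)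
    (S : Set (List ℕ)) (hST : S ⊆ T)
    (hS : ∀ v ∈ bdry T, ∃! s : List ℕ, s ∈ S ∧ s <+: v) :
    ∑' s : S, ENNReal.ofReal (lenWt ℓ s * mass T P s) =
    ∑' x : intr T, ENNReal.ofReal
      (if (x : List ℕ) ∈ intr (subTreeOf S) then mass T P x * ℓ x else 0) := by
  rw [tsum_subtype S (fun s => ENNReal.ofReal (lenWt ℓ s * mass T P s)),
    tsum_subtype (intr T) (fun x => ENNReal.ofReal
      (if (x : List ℕ) ∈ intr (subTreeOf S) then mass T P x * ℓ x else 0))]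
  have e : ∀ s, S.indicator (fun s => ENNReal.ofReal (lenWt ℓ s * mass T P s)) s =
      ∑' x, (if s ∈ S ∧ x <+: s ∧ x ≠ s then emass T P s else 0) * ENNReal.ofReal (ℓ x) := by
    intro s
    by_cases hs : s ∈ S
    · have hnn : ∀ i ∈ Finset.range s.length, 0 ≤ ℓ (s.take i) := by
        intro i hi
        apply (hℓ _ _).le
        apply prefix_intr' hT (hST hs) (List.take_prefix _ _)
        intro h
        have := congrArg List.length h
        simp at this hi; omega
      rw [Set.indicator_of_mem hs, mul_comm, ENNReal.ofReal_mul (mass_nonneg hP s), ofReal_mass hP,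
        lenWt, ENNReal.ofReal_sum_of_nonneg hnn, sum_take s (fun x => ENNReal.ofReal (ℓ x)),
        ← ENNReal.tsum_mul_left]
      apply tsum_congr
      intro x
      by_cases h : x <+: s ∧ x ≠ s
      · rw [if_pos h, if_pos ⟨hs, h⟩]
      · rw [if_neg h, if_neg (fun h' => h h'.2)]; simp
    · rw [Set.indicator_of_notMem hs]; simp [hs]
  simp_rw [e]
  rw [ENNReal.tsum_comm]
  apply tsum_congr
  intro x
  rw [ENNReal.tsum_mul_right, cross_em hT hG S hST hS]
  by_cases hx : x ∈ intr (subTreeOf S)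
  · have hxT : x ∈ intr T := by
      obtain ⟨s, hs, h1, h2⟩ := (mem_sub_iff x).1 hx
      exact prefix_intr' hT (hST hs) h1 h2
    rw [if_pos hx, Set.indicator_of_mem hxT, if_pos hx, ENNReal.ofReal_mul (mass_nonneg hP x),
      ofReal_mass hP]
  · rw [if_neg hx, zero_mul]
    by_cases hxT : x ∈ intr T
    · rw [Set.indicator_of_mem hxT, if_neg hx, ENNReal.ofReal_zero]
    · rw [Set.indicator_of_notMem hxT]

open Classical in
lemma cross_hasSum {T : Set (List ℕ)} (hT : IsTree T) (hG : NoInfGeo T) {P : List ℕ → ℝ}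
    (hP : IsProbOn (bdry T) P) (ℓ : List ℕ → ℝ) (hℓ : ∀ x ∈ intr T, 0 < ℓ x)
    (S : Set (List ℕ)) (hST : S ⊆ T)
    (hS : ∀ v ∈ bdry T, ∃! s : List ℕ, s ∈ S ∧ s <+: v)
    (hn : Summable (fun x : intr T => mass T P x * ℓ x)) :
    HasSum (fun x : intr T =>
      if (x : List ℕ) ∈ intr (subTreeOf S) then mass T P x * ℓ x else 0)
      (∑' s : S, lenWt ℓ s * mass T P s) := by
  have hx0 : ∀ x : intr T, 0 ≤ mass T P x * ℓ x := fun x =>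
    mul_nonneg (mass_nonneg hP x) (hℓ x x.2).le
  have h0 : ∀ x : intr T, 0 ≤
      if (x : List ℕ) ∈ intr (subTreeOf S) then mass T P x * ℓ x else 0 := by
    intro x; split_ifs
    · exact hx0 x
    · exact le_rfl
  have hs : Summable (fun x : intr T =>
      if (x : List ℕ) ∈ intr (subTreeOf S) then mass T P x * ℓ x else 0) := by
    apply Summable.of_nonneg_of_le h0 _ hn
    intro x; split_ifs
    · exact le_rfl
    · exact hx0 x
  have e := cross_enn hT hG hP ℓ hℓ S hST hS
  rw [← ENNReal.ofReal_tsum_of_nonneg h0 hs] at e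
  have hl : ∀ s : S, 0 ≤ lenWt ℓ s * mass T P s := by
    intro s
    apply mul_nonneg _ (mass_nonneg hP s)
    apply Finset.sum_nonneg
    intro i hi
    apply (hℓ _ _).le
    apply prefix_intr' hT (hST s.2) (List.take_prefix _ _)
    intro h
    have := congrArg List.length h
    simp at this hi; omega
  have := hasSum_of_ofReal hl (tsum_nonneg h0) e
  rw [this.tsum_eq]
  exact hs.hasSum

lemma second_one_sided {ι : Type*} (μ ν h : ι → ℝ) (U : Set ι) [DecidablePred (· ∈ U)]
    (A a As as α β : ℝ)
    (hμ0 : ∀ i, 0 ≤ μ i) (hν0 : ∀ i, 0 ≤ ν i) (hμ : HasSum μ 1) (hν : HasSum ν 1)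
    (hα : HasSum (fun i => if i ∈ U then μ i else 0) α)
    (hβ : HasSum (fun i => if i ∈ U then ν i else 0) β)
    (hA : ∀ i, h i ≤ A) (ha : ∀ i, a ≤ h i) (hAs : ∀ i ∉ U, h i ≤ As) (has : ∀ i ∉ U, as ≤ h i)
    (h1 : a ≤ as) (h2 : as ≤ As) (h3 : As ≤ A)
    (r : ℝ) (hr : HasSum (fun i => (μ i - ν i) * h i) r) :
    r ≤ (As - as) / 2 * ∑' i, |μ i - ν i| + (A - a) * max α β := by
  set m := (As + as) / 2 with hm
  have sabs : Summable fun i => |μ i - ν i| := (hμ.sub hν).summable.abs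
  have hl : HasSum (fun i => (μ i - ν i) * (h i - m)) r := by
    have := hr.sub ((hμ.sub hν).mul_right m)
    simp only [sub_self, zero_mul, sub_zero] at this
    have e : (fun i => (μ i - ν i) * (h i - m)) =
        fun i => (μ i - ν i) * h i - (μ i - ν i) * m := by
      funext i; ring
    rw [e]; exact this
  have hR := (sabs.hasSum.mul_left ((As - as) / 2)).add ((hα.mul_left (A - m)).add
    (hβ.mul_left (m - a)))
  have le := hasSum_le (fun i => ?_) hl hR
  · have k1 : (A - m) * α ≤ (A - m) * max α β :=
      mul_le_mul_of_nonneg_left (le_max_left _ _) (by rw [hm]; linarith)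
    have k2 : (m - a) * β ≤ (m - a) * max α β :=
      mul_le_mul_of_nonneg_left (le_max_right _ _) (by rw [hm]; linarith)
    nlinarith
  · by_cases hi : i ∈ U
    · simp only [if_pos hi]
      have k1 : μ i * (h i - m) ≤ μ i * (A - m) :=
        mul_le_mul_of_nonneg_left (by linarith [hA i]) (hμ0 i)
      have k2 : ν i * (m - h i) ≤ ν i * (m - a) :=
        mul_le_mul_of_nonneg_left (by linarith [ha i]) (hν0 i)
      have k3 : 0 ≤ (As - as) / 2 * |μ i - ν i| := mul_nonneg (by linarith) (abs_nonneg _)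
      nlinarith
    · simp only [if_neg hi, mul_zero, add_zero]
      have k : |h i - m| ≤ (As - as) / 2 := by
        rw [abs_le]
        have := hAs i hi
        have := has i hi
        constructor <;> rw [hm] <;> linarith
      calc _ ≤ |(μ i - ν i) * (h i - m)| := le_abs_self _
        _ = |h i - m| * |μ i - ν i| := by rw [abs_mul, mul_comm]
        _ ≤ _ := mul_le_mul_of_nonneg_right k (abs_nonneg _)

lemma local_bound {T : Set (List ℕ)} (hT : IsTree T) (hG : NoInfGeo T) {P Q : List ℕ → ℝ}
    (hP : IsProbOn (bdry T) P) (hQ : IsProbOn (bdry T) Q) (x : List ℕ) (hx : x ∈ intr T)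
    (hsG : Summable fun y : succs T x =>
      (fwd T P x y * Real.log (fwd T P x y / fwd T Q x y) + fwd T Q x y - fwd T P x y))
    (ε : ℝ) (hε : 0 < ε) (M : ℕ)
    (hM : ∃ F : Finset (List ℕ), ↑F ⊆ succs T x ∧ F.card ≤ M ∧
      (Summable fun y : {y : List ℕ // y ∈ succs T x ∧ y ∉ F} => phi (fwd T P x y)) ∧
      (∑' y : {y : List ℕ // y ∈ succs T x ∧ y ∉ F}, phi (fwd T P x y)) < ε ∧
      (Summable fun y : {y : List ℕ // y ∈ succs T x ∧ y ∉ F} => phi (fwd T Q x y)) ∧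
      (∑' y : {y : List ℕ // y ∈ succs T x ∧ y ∉ F}, phi (fwd T Q x y)) < ε)
    (δ : ℝ) (hδ0 : 0 < δ) (hδ : δ < 1/2) :
    |Hloc T P x - Hloc T Q x| ≤ (2 * ε + M * phi δ) +
      2 / (Real.exp 1 * Real.log 2 * δ) * Real.sqrt 2 * Real.sqrt (Gloc T P Q x) := by
  classical
  obtain ⟨F, hF, hFM, sP, tP, sQ, tQ⟩ := hM
  have split : ∀ R : List ℕ → ℝ,
      (Summable fun y : {y : List ℕ // y ∈ succs T x ∧ y ∉ F} => phi (fwd T R x y)) →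
      Hloc T R x = ∑ y ∈ F, phi (fwd T R x y) +
        ∑' y : {y : List ℕ // y ∈ succs T x ∧ y ∉ F}, phi (fwd T R x y) := by
    intro R hR
    have h1 := F.hasSum (fun y => phi (fwd T R x y))
    have h2 : HasSum ((fun y => phi (fwd T R x y)) ∘
      (Subtype.val : {y : List ℕ | y ∈ succs T x ∧ y ∉ F} → List ℕ)) _ := hR.hasSum
    have h3 := HasSum.add_disjoint (Set.disjoint_left.2 (fun y hy hy' => hy'.2 hy)) h1 h2
    have es : (F : Set (List ℕ)) ∪ {y : List ℕ | y ∈ succs T x ∧ y ∉ F} = succs T x := by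
      ext y
      by_cases hy : y ∈ F
      · simp [hy, hF hy]
      · simp [hy]
    rw [es] at h3
    exact h3.tsum_eq
  rw [split P sP, split Q sQ]
  have tP0 : 0 ≤ ∑' y : {y : List ℕ // y ∈ succs T x ∧ y ∉ F}, phi (fwd T P x y) :=
    tsum_nonneg fun y => phi_nonneg (fwd_pos hT hG hP y.2.1).le (fwd_le_one hT hG hP y.2.1)
  have tQ0 : 0 ≤ ∑' y : {y : List ℕ // y ∈ succs T x ∧ y ∉ F}, phi (fwd T Q x y) :=
    tsum_nonneg fun y => phi_nonneg (fwd_pos hT hG hQ y.2.1).le (fwd_le_one hT hG hQ y.2.1)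
  have phd : 0 ≤ phi δ := phi_nonneg hδ0.le (by linarith)
  set K := 2 / (Real.exp 1 * Real.log 2 * δ) with hK
  have hK0 : 0 ≤ K := by have := log2_pos; positivity
  have hsum1 : |∑ y ∈ F, phi (fwd T P x y) - ∑ y ∈ F, phi (fwd T Q x y)| ≤
      M * phi δ + K * ∑ y ∈ F, |fwd T P x y - fwd T Q x y| := by
    rw [← Finset.sum_sub_distrib]
    calc _ ≤ ∑ y ∈ F, |phi (fwd T P x y) - phi (fwd T Q x y)| := Finset.abs_sum_le_sum_abs _ _
      _ ≤ ∑ y ∈ F, (phi δ + K * |fwd T P x y - fwd T Q x y|) := by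
        apply Finset.sum_le_sum
        intro y hy
        have hy' := hF hy
        exact phi_diff _ _ _ (fwd_pos hT hG hP hy') (fwd_le_one hT hG hP hy')
          (fwd_pos hT hG hQ hy') (fwd_le_one hT hG hQ hy') hδ0 hδ
      _ = F.card * phi δ + K * ∑ y ∈ F, |fwd T P x y - fwd T Q x y| := by
        rw [Finset.sum_add_distrib, Finset.mul_sum]; simp
      _ ≤ _ := by
        gcongr
  -- Pinsker
  have fin_le : ∀ g : List ℕ → ℝ, (∀ y ∈ succs T x, 0 ≤ g y) →
      (Summable fun y : succs T x => g y) → ∑ y ∈ F, g y ≤ ∑' y : succs T x, g y := by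
    intro g hg hs
    rw [tsum_subtype (succs T x) g]
    have hs' : Summable ((succs T x).indicator g) := summable_subtype_iff_indicator.1 hs
    calc _ = ∑ y ∈ F, (succs T x).indicator g y := by
          apply Finset.sum_congr rfl
          intro y hy
          rw [Set.indicator_of_mem (hF hy)]
      _ ≤ _ := hs'.sum_le_tsum F (fun y _ => Set.indicator_nonneg hg y)
  have hpin : (∑ y ∈ F, |fwd T P x y - fwd T Q x y|) ^ 2 ≤ 2 * Gloc T P Q x := by
    have hterm : ∀ y ∈ succs T x, 0 ≤ fwd T P x y * Real.log (fwd T P x y / fwd T Q x y)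
        + fwd T Q x y - fwd T P x y := fun y hy =>
      gterm_nonneg (fwd_pos hT hG hP hy) (fwd_pos hT hG hQ hy)
    have cs := Finset.sum_sq_le_sum_mul_sum_of_sq_le_mul F
      (r := fun y => |fwd T P x y - fwd T Q x y|)
      (f := fun y => (2 * fwd T P x y + 4 * fwd T Q x y) / 3)
      (g := fun y => fwd T P x y * Real.log (fwd T P x y / fwd T Q x y)
        + fwd T Q x y - fwd T P x y)
      (fun y hy => by
        have := fwd_pos hT hG hP (hF hy)
        have := fwd_pos hT hG hQ (hF hy)
        positivity)
      (fun y hy => hterm y (hF hy))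
      (fun y hy => by
        rw [sq_abs]
        exact pinsker_pt _ _ (fwd_pos hT hG hP (hF hy)) (fwd_pos hT hG hQ (hF hy)))
    refine cs.trans ?_
    have hp1 := fin_le (fun y => fwd T P x y) (fun y hy => (fwd_pos hT hG hP hy).le)
      (fwd_hasSum hT hG hP hx).summable
    have hq1 := fin_le (fun y => fwd T Q x y) (fun y hy => (fwd_pos hT hG hQ hy).le)
      (fwd_hasSum hT hG hQ hx).summable
    rw [(fwd_hasSum hT hG hP hx).tsum_eq] at hp1
    rw [(fwd_hasSum hT hG hQ hx).tsum_eq] at hq1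
    have hg1 := fin_le _ hterm hsG
    apply mul_le_mul _ hg1 (Finset.sum_nonneg fun y hy => hterm y (hF hy)) (by norm_num)
    rw [← Finset.sum_div, Finset.sum_add_distrib, ← Finset.mul_sum, ← Finset.mul_sum]
    linarith
  have hsq : ∑ y ∈ F, |fwd T P x y - fwd T Q x y| ≤ Real.sqrt 2 * Real.sqrt (Gloc T P Q x) := by
    rw [← Real.sqrt_mul (by norm_num)]
    exact Real.le_sqrt_of_sq_le hpin
  have hKs := mul_le_mul_of_nonneg_left hsq hK0
  rw [← mul_assoc] at hKs
  rw [abs_le] at hsum1 ⊢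
  constructor <;> linarith [hsum1.1, hsum1.2]
/-- Cross-section variant of the main comparison theorem (Lemma `variant`):
the term `((A−a)/2)·‖μ_P − μ_Q‖₁` can be replaced by
`((A*_S − a*_S)/2)·‖μ_P − μ_Q‖₁ + (A − a)·max{ℓ(P_S)/ℓ(P), ℓ(Q_S)/ℓ(Q)}`. -/
theorem cross_section_comparison
    (T : Set (List ℕ)) (hT : IsTree T) (hU : NoUnary T) (hG : NoInfGeo T)
    (hB : (bdry T).Nonempty) (hroot : ([] : List ℕ) ∈ intr T)
    (ℓ : List ℕ → ℝ) (hℓ : ∀ x ∈ intr T, 0 < ℓ x)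
    (P Q : List ℕ → ℝ) (hP : IsProbOn (bdry T) P) (hQ : IsProbOn (bdry T) Q)
    (hlenP : Summable fun v : bdry T => lenWt ℓ v * P v)
    (hlenQ : Summable fun v : bdry T => lenWt ℓ v * Q v)
    (hlenSharpP : Summable fun v : bdry T => ((v : List ℕ).length : ℝ) * P v)
    (hHP : Summable fun v : bdry T => phi (P v))
    (hHQ : Summable fun v : bdry T => phi (Q v))
    (hD : Summable fun v : bdry T => |P v * Real.logb 2 (P v / Q v)|)
    (S : Set (List ℕ)) (hST : S ⊆ T)
    (hS : ∀ v ∈ bdry T, ∃! s : List ℕ, s ∈ S ∧ s <+: v)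
    (A a Astar astar : ℝ)
    (hA : IsLUB {r : ℝ | ∃ x ∈ intr T, r = Hloc T Q x / ℓ x} A)
    (ha : IsGLB {r : ℝ | ∃ x ∈ intr T, r = Hloc T Q x / ℓ x} a)
    (hAstar : IsLUB {r : ℝ | ∃ x ∈ intr T \ intr (subTreeOf S), r = Hloc T Q x / ℓ x} Astar)
    (hastar : IsGLB {r : ℝ | ∃ x ∈ intr T \ intr (subTreeOf S), r = Hloc T Q x / ℓ x} astar)
    (ε : ℝ) (hε : 0 < ε) (M : ℕ)
    (hM : ∀ x ∈ intr T, ∃ F : Finset (List ℕ), ↑F ⊆ succs T x ∧ F.card ≤ M ∧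
      (Summable fun y : {y : List ℕ // y ∈ succs T x ∧ y ∉ F} => phi (fwd T P x y)) ∧
      (∑' y : {y : List ℕ // y ∈ succs T x ∧ y ∉ F}, phi (fwd T P x y)) < ε ∧
      (Summable fun y : {y : List ℕ // y ∈ succs T x ∧ y ∉ F} => phi (fwd T Q x y)) ∧
      (∑' y : {y : List ℕ // y ∈ succs T x ∧ y ∉ F}, phi (fwd T Q x y)) < ε)
    (δ : ℝ) (hδ0 : 0 < δ) (hδ : δ < 1/2) :
    |(∑' v : bdry T, phi (P v)) / expLen T ℓ P
        - (∑' v : bdry T, phi (Q v)) / expLen T ℓ Q|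
      ≤ (expLen T (fun _ => 1) P / expLen T ℓ P) * (2 * ε + M * phi δ)
        + (2 * Real.sqrt 2 / (Real.exp 1 * Real.sqrt (Real.log 2)))
            * Real.sqrt (expLen T (fun _ => 1) P / expLen T ℓ P) / δ
            * Real.sqrt ((∑' v : bdry T, P v * Real.logb 2 (P v / Q v)) / expLen T ℓ P)
        + (Astar - astar) / 2 * ∑' x : intr T, |nodeAvg T ℓ P x - nodeAvg T ℓ Q x|
        + (A - a) * max ((∑' s : S, lenWt ℓ s * mass T P s) / expLen T ℓ P)
                        ((∑' s : S, lenWt ℓ s * mass T Q s) / expLen T ℓ Q) := by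
  classical
  have hℓ0 : ∀ x ∈ intr T, 0 ≤ ℓ x := fun x hx => (hℓ x hx).le
  have hnP := vertex_hasSum hT hP ℓ hℓ0 hlenP
  have hnQ := vertex_hasSum hT hQ ℓ hℓ0 hlenQ
  have hn1 : HasSum (fun x : intr T => mass T P x) (expLen T (fun _ => 1) P) := by
    have := vertex_hasSum hT hP (fun _ => 1) (fun _ _ => zero_le_one)
      (by simpa [lenWt] using hlenSharpP)
    simpa using this
  have posLen : ∀ R : List ℕ → ℝ, IsProbOn (bdry T) R →
      HasSum (fun x : intr T => mass T R x * ℓ x) (expLen T ℓ R) → 0 < expLen T ℓ R := by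
    intro R hR h
    have hterm : ∀ x : intr T, 0 < mass T R x * ℓ x := fun x =>
      mul_pos (mass_pos hT hG hR x.2.1) (hℓ x x.2)
    have := le_hasSum h ⟨[], hroot⟩ (fun y _ => (hterm y).le)
    exact lt_of_lt_of_le (hterm ⟨[], hroot⟩) this
  have lP := posLen P hP hnP
  have lQ := posLen Q hQ hnQ
  obtain ⟨_, hEP⟩ := entropy_hasSum hT hG hP hHP
  obtain ⟨_, hEQ⟩ := entropy_hasSum hT hG hQ hHQ
  obtain ⟨hsG, hGs⟩ := diverg_hasSum hT hG hP hQ hn1 hlenSharpP hD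
  have cP := cross_hasSum hT hG hP ℓ hℓ S hST hS hnP.summable
  have cQ := cross_hasSum hT hG hQ ℓ hℓ S hST hS hnQ.summable
  set h : intr T → ℝ := fun x => Hloc T Q x / ℓ x with hh
  set μ : intr T → ℝ := fun x => nodeAvg T ℓ P x with hμd
  set ν : intr T → ℝ := fun x => nodeAvg T ℓ Q x with hνd
  have prob : ∀ R : List ℕ → ℝ, HasSum (fun x : intr T => mass T R x * ℓ x) (expLen T ℓ R) →
      0 < expLen T ℓ R → HasSum (fun x : intr T => nodeAvg T ℓ R x) 1 := by
    intro R h1 h2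
    have := h1.div_const (expLen T ℓ R)
    rw [div_self h2.ne'] at this
    have e : (fun x : intr T => nodeAvg T ℓ R x) =
        fun x : intr T => mass T R x * ℓ x / expLen T ℓ R := by
      funext x; unfold nodeAvg; ring
    rw [e]; exact this
  have hμ := prob P hnP lP
  have hν := prob Q hnQ lQ
  have nn : ∀ R : List ℕ → ℝ, IsProbOn (bdry T) R → 0 < expLen T ℓ R →
      ∀ x : intr T, 0 ≤ nodeAvg T ℓ R x := by
    intro R hR h2 x
    exact div_nonneg (mul_nonneg (hℓ0 x x.2) (mass_nonneg hR x)) h2.le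
  have hμ0 := nn P hP lP
  have hν0 := nn Q hQ lQ
  have hA' : ∀ x : intr T, h x ≤ A := fun x => hA.1 ⟨x, x.2, rfl⟩
  have ha' : ∀ x : intr T, a ≤ h x := fun x => ha.1 ⟨x, x.2, rfl⟩
  set U : Set (intr T) := {x | (x : List ℕ) ∈ intr (subTreeOf S)} with hU'
  have hAs' : ∀ x ∉ U, h x ≤ Astar := fun x hx => hAstar.1 ⟨x, ⟨x.2, hx⟩, rfl⟩
  have has' : ∀ x ∉ U, astar ≤ h x := fun x hx => hastar.1 ⟨x, ⟨x.2, hx⟩, rfl⟩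
  have hne : ∃ x : intr T, x ∉ U := by
    obtain ⟨r, x, hx, _⟩ := hAstar.nonempty
    exact ⟨⟨x, hx.1⟩, hx.2⟩
  obtain ⟨x0, hx0⟩ := hne
  have k1 : a ≤ astar := hastar.2 (by
    rintro r ⟨x, hx, rfl⟩
    exact ha.1 ⟨x, hx.1, rfl⟩)
  have k2 : astar ≤ Astar := (has' x0 hx0).trans (hAs' x0 hx0)
  have k3 : Astar ≤ A := hAstar.2 (by
    rintro r ⟨x, hx, rfl⟩
    exact hA.1 ⟨x, hx.1, rfl⟩)
  have crossμ : ∀ R : List ℕ → ℝ, HasSum (fun x : intr T =>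
      if (x : List ℕ) ∈ intr (subTreeOf S) then mass T R x * ℓ x else 0)
      (∑' s : S, lenWt ℓ s * mass T R s) →
      HasSum (fun x : intr T => if x ∈ U then nodeAvg T ℓ R x else 0)
      ((∑' s : S, lenWt ℓ s * mass T R s) / expLen T ℓ R) := by
    intro R hR
    have := hR.div_const (expLen T ℓ R)
    have e : (fun x : intr T => if x ∈ U then nodeAvg T ℓ R x else 0) =
        fun x : intr T => (if (x : List ℕ) ∈ intr (subTreeOf S) then mass T R x * ℓ x else 0)
          / expLen T ℓ R := by
      funext x
      by_cases hx : (x : List ℕ) ∈ intr (subTreeOf S)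
      · rw [if_pos hx, if_pos (show x ∈ U from hx)]; unfold nodeAvg; ring
      · rw [if_neg hx, if_neg (show x ∉ U from hx), zero_div]
    rw [e]; exact this
  have hα := crossμ P cP
  have hβ := crossμ Q cQ
  -- cross term
  have sμh : Summable fun x => μ x * h x := by
    apply Summable.of_norm_bounded (hμ.summable.mul_right (max |A| |a|))
    intro x
    rw [Real.norm_eq_abs, abs_mul, abs_of_nonneg (hμ0 x)]
    apply mul_le_mul_of_nonneg_left _ (hμ0 x)
    rw [max_comm]
    exact abs_le_max_abs_abs (ha' x) (hA' x)
  have hX := sμh.hasSum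
  set X := ∑' x, μ x * h x with hXd
  have hνh : HasSum (fun x => ν x * h x) ((∑' v : bdry T, phi (Q v)) / expLen T ℓ Q) := by
    have := hEQ.div_const (expLen T ℓ Q)
    have e : (fun x => ν x * h x) = fun x : intr T => mass T Q x * Hloc T Q x / expLen T ℓ Q := by
      funext x
      have := (hℓ x x.2).ne'
      simp only [hνd, hh, nodeAvg]
      field_simp
    rw [e]; exact this
  have second : |X - (∑' v : bdry T, phi (Q v)) / expLen T ℓ Q| ≤
      (Astar - astar) / 2 * ∑' x : intr T, |nodeAvg T ℓ P x - nodeAvg T ℓ Q x|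
        + (A - a) * max ((∑' s : S, lenWt ℓ s * mass T P s) / expLen T ℓ P)
                        ((∑' s : S, lenWt ℓ s * mass T Q s) / expLen T ℓ Q) := by
    rw [abs_le']
    constructor
    · apply second_one_sided μ ν h U A a Astar astar _ _ hμ0 hν0 hμ hν hα hβ hA' ha' hAs' has'
        k1 k2 k3
      have := hX.sub hνh
      simpa only [← sub_mul] using this
    · have r := second_one_sided ν μ h U A a Astar astar _ _ hν0 hμ0 hν hμ hβ hα hA' ha' hAs' has'
        k1 k2 k3 (-(X - (∑' v : bdry T, phi (Q v)) / expLen T ℓ Q)) (by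
          have := hνh.sub hX
          simpa only [← sub_mul, neg_sub] using this)
      rw [max_comm] at r
      simpa only [abs_sub_comm (ν _) (μ _)] using r
  -- first term
  have hfirst : HasSum (fun x : intr T => mass T P x / expLen T ℓ P * (Hloc T P x - Hloc T Q x))
      ((∑' v : bdry T, phi (P v)) / expLen T ℓ P - X) := by
    have := (hEP.div_const (expLen T ℓ P)).sub hX
    have e : (fun x : intr T => mass T P x / expLen T ℓ P * (Hloc T P x - Hloc T Q x)) =
        fun x : intr T => mass T P x * Hloc T P x / expLen T ℓ P - μ x * h x := by
      funext x
      have := (hℓ x x.2).ne'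
      simp only [hμd, hh, nodeAvg]
      field_simp
    rw [e]; exact this
  have hG0 : ∀ x : intr T, 0 ≤ Gloc T P Q x := fun x => tsum_nonneg fun y =>
    gterm_nonneg (fwd_pos hT hG hP y.2) (fwd_pos hT hG hQ y.2)
  obtain ⟨scs, hcs⟩ := cs_tsum (fun x : intr T => mass T P x) (fun x : intr T => Gloc T P Q x)
    (fun x => mass_nonneg hP x) hG0 hn1.summable hGs.summable
  rw [hn1.tsum_eq, hGs.tsum_eq] at hcs
  set D := ∑' v : bdry T, P v * Real.logb 2 (P v / Q v) with hDd
  set N := expLen T (fun _ => 1) P with hN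
  set c := 2 * ε + M * phi δ with hc
  set K := 2 / (Real.exp 1 * Real.log 2 * δ) * Real.sqrt 2 with hK
  have hK0 : 0 ≤ K := by have := log2_pos; positivity
  have hbound := (hn1.mul_left (c / expLen T ℓ P)).add (scs.hasSum.mul_left (K / expLen T ℓ P))
  have hpt : ∀ x : intr T, |mass T P x / expLen T ℓ P * (Hloc T P x - Hloc T Q x)| ≤
      c / expLen T ℓ P * mass T P x +
        K / expLen T ℓ P * (mass T P x * Real.sqrt (Gloc T P Q x)) := by
    intro x
    have hb := local_bound hT hG hP hQ x x.2 (hsG x x.2) ε hε M (hM x x.2) δ hδ0 hδ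
    have hm0 : 0 ≤ mass T P x / expLen T ℓ P := div_nonneg (mass_nonneg hP x) lP.le
    rw [abs_mul, abs_of_nonneg hm0]
    refine (mul_le_mul_of_nonneg_left hb hm0).trans (le_of_eq ?_)
    rw [← hc, ← hK]
    ring
  have first : |(∑' v : bdry T, phi (P v)) / expLen T ℓ P - X| ≤
      N / expLen T ℓ P * c + (2 * Real.sqrt 2 / (Real.exp 1 * Real.sqrt (Real.log 2)))
            * Real.sqrt (N / expLen T ℓ P) / δ * Real.sqrt (D / expLen T ℓ P) := by
    have step1 : |(∑' v : bdry T, phi (P v)) / expLen T ℓ P - X| ≤ c / expLen T ℓ P * N +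
        K / expLen T ℓ P * ∑' x : intr T, mass T P x * Real.sqrt (Gloc T P Q x) := by
      rw [abs_le']
      exact ⟨hasSum_le (fun x => (le_abs_self _).trans (hpt x)) hfirst hbound,
        hasSum_le (fun x => (neg_le_abs _).trans (hpt x)) hfirst.neg hbound⟩
    refine step1.trans ?_
    have step2 := mul_le_mul_of_nonneg_left hcs (div_nonneg hK0 lP.le)
    have eq : K / expLen T ℓ P * (Real.sqrt N * Real.sqrt (Real.log 2 * D)) =
        (2 * Real.sqrt 2 / (Real.exp 1 * Real.sqrt (Real.log 2)))
            * Real.sqrt (N / expLen T ℓ P) / δ * Real.sqrt (D / expLen T ℓ P) := by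
      rw [Real.sqrt_mul log2_pos.le, Real.sqrt_div' _ lP.le, Real.sqrt_div' _ lP.le, hK]
      have e1 : Real.log 2 = Real.sqrt (Real.log 2) ^ 2 := (Real.sq_sqrt log2_pos.le).symm
      have e2 : expLen T ℓ P = Real.sqrt (expLen T ℓ P) ^ 2 := (Real.sq_sqrt lP.le).symm
      have p1 : 0 < Real.sqrt (Real.log 2) := Real.sqrt_pos.2 log2_pos
      have p2 : 0 < Real.sqrt (expLen T ℓ P) := Real.sqrt_pos.2 lP
      generalize hs1 : Real.sqrt (Real.log 2) = s1 at *
      generalize hs2 : Real.sqrt (expLen T ℓ P) = s2 at *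
      rw [e1, e2]
      have := Real.exp_pos 1
      field_simp
    rw [eq] at step2
    have : c / expLen T ℓ P * N = N / expLen T ℓ P * c := by ring
    linarith
  have tri := abs_sub_le ((∑' v : bdry T, phi (P v)) / expLen T ℓ P) X
    ((∑' v : bdry T, phi (Q v)) / expLen T ℓ Q)
  linarith
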